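/- arXiv:2509.01861 — 5 statements merged into one kernel-verified Lean document; each statement's English description precedes it below -/
import Mathlib

section
/- (Kolmogorov–Smirnov bound) Let G¹ and G⁰ be Borel probability measures on ℝ, with cumulative distribution functions F₁ and F₀, whose supports are contained in a closed set A ⊆ ℝ. Let h : A → ℝ be continuous and bounded, and let H denote the set of all continuous bounded functions g : ℝ → ℝ extending h (i.e. g = h on A). Then H is nonempty, and |∫_A h dG¹ − ∫_A h dG⁰| ≤ (sup_{x ∈ ℝ} |F₁(x) − F₀(x)|) · inf_{g ∈ H} V(g), where V(g) denotes the total variation of g over all of ℝ. (In the paper, with h the misspecification function f₀ − l_θ(·,0) restricted to the union of the supports, the left-hand side equals the regression bias |β − τ|.) -/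
open MeasureTheory

/-- The set of continuous bounded extensions of `h` from `A` to all of `ℝ`. -/
def ksExtensions (A : Set ℝ) (h : ℝ → ℝ) : Set (ℝ → ℝ) :=
  {g : ℝ → ℝ | Continuous g ∧ (∃ M : ℝ, ∀ x : ℝ, |g x| ≤ M) ∧ ∀ x ∈ A, g x = h x}

/-!
Two finite measures on a linear order whose distribution functions differ by at most `K` differ by
at most `K` on every lower set, since a lower set is a countable increasing union of half-lines.
The layer-cake formula turns this into `|∫ f ∂μ - ∫ f ∂ν| ≤ K * (b - a)` for monotone `f` with
values in `[a, b]` and measures of equal mass. A function of bounded variation on `A` is a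
difference of two monotone functions whose oscillations add up to at most its variation. That
variation on `A` is at most the variation over `ℝ` of any extension.
-/

open Set Filter Topology

section Order

variable {α : Type*} [LinearOrder α]

lemma exists_countable_biUnion_Iic_eq_of_isLowerSet [TopologicalSpace α] [OrderTopology α]
    [SecondCountableTopology α] {s : Set α} (hs : IsLowerSet s) :
    ∃ T : Set α, T.Countable ∧ ⋃ x ∈ T, Iic x = s := by
  by_cases hmax : ∃ m, IsGreatest s m
  · obtain ⟨m, hm⟩ := hmax
    exact ⟨{m}, countable_singleton m, by
      simpa using Subset.antisymm (hs.Iic_subset hm.1) fun _ hx ↦ hm.2 hx⟩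
  · obtain ⟨T, hTs, hT, hUnion⟩ :=
      TopologicalSpace.isOpen_biUnion_countable s Iio fun _ _ ↦ isOpen_Iio
    refine ⟨T, hT, Subset.antisymm (iUnion₂_subset fun x hx ↦ hs.Iic_subset (hTs hx)) ?_⟩
    intro x hx
    obtain ⟨y, hy, hxy⟩ : ∃ y ∈ s, x < y := by
      by_contra! hle
      exact hmax ⟨x, hx, hle⟩
    have hxT : x ∈ ⋃ z ∈ T, Iio z := hUnion ▸ mem_biUnion hy hxy
    exact iUnion₂_mono (fun _ _ ↦ Iio_subset_Iic_self) hxT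

lemma exists_mapsTo_Icc_of_forall_sub_le {β : Type*} {f : β → ℝ} {s : Set β} {c : ℝ}
    (hs : s.Nonempty) (hf : ∀ x ∈ s, ∀ y ∈ s, f y - f x ≤ c) :
    ∃ a, MapsTo f s (Icc a (a + c)) := by
  obtain ⟨a, ha_upper, ha_lower⟩ : (upperBounds ((fun y ↦ f y - c) '' s) ∩
      lowerBounds (f '' s)).Nonempty := by
    refine exists_between_of_forall_le (hs.image _) (hs.image _) ?_
    rintro _ ⟨y, hy, rfl⟩ _ ⟨x, hx, rfl⟩
    exact sub_le_comm.1 (hf x hx y hy)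
  exact ⟨a, fun x hx ↦ ⟨ha_lower (mem_image_of_mem f hx),
    sub_le_iff_le_add.1 (ha_upper (mem_image_of_mem _ hx))⟩⟩

lemma exists_monotoneOn_sub_mapsTo_Icc {h : α → ℝ} {s : Set α} (hs : s.Nonempty)
    (hh : BoundedVariationOn h s) :
    ∃ (p q : α → ℝ) (a b c d : ℝ), MonotoneOn p s ∧ MonotoneOn q s ∧ h = p - q ∧
      MapsTo p s (Icc a b) ∧ MapsTo q s (Icc c d) ∧
      (b - a) + (d - c) = (eVariationOn h s).toReal := by
  set V := (eVariationOn h s).toReal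
  obtain ⟨p, q, hp, hq, hpq, hvar⟩ :=
    hh.locallyBoundedVariationOn.exists_monotoneOn_sub_monotoneOn'
  have hosc : ∀ x ∈ s, ∀ y ∈ s, ∀ x' ∈ s, ∀ y' ∈ s, (p y - p x) + (q y' - q x') ≤ V := by
    intro x hx y hy x' hx' y' hy'
    have hmin : min x x' ∈ s := min_rec' s hx hx'
    have hmax : max y y' ∈ s := max_rec' s hy hy'
    calc (p y - p x) + (q y' - q x')
        ≤ (p (max y y') - p (min x x')) + (q (max y y') - q (min x x')) := by
          gcongr
          · exact hp hy hmax (le_max_left _ _)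
          · exact hp hmin hx (min_le_left _ _)
          · exact hq hy' hmax (le_max_right _ _)
          · exact hq hmin hx' (min_le_right _ _)
      _ = variationOnFromTo h s (min x x') (max y y') := hvar _ hmin _ hmax
      _ ≤ V := (le_abs_self _).trans (variationOnFromTo.abs_le_eVariationOn hh)
  obtain ⟨c, hc_upper, hc_lower⟩ :
      (upperBounds (image2 (fun x y ↦ p y - p x) s s) ∩
        lowerBounds (image2 (fun x y ↦ V - (q y - q x)) s s)).Nonempty := by
    refine exists_between_of_forall_le (hs.image2 hs) (hs.image2 hs) ?_
    rintro _ ⟨x, hx, y, hy, rfl⟩ _ ⟨x', hx', y', hy', rfl⟩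
    exact le_sub_iff_add_le.2 (hosc x hx y hy x' hx' y' hy')
  obtain ⟨a, ha⟩ := exists_mapsTo_Icc_of_forall_sub_le hs fun x hx y hy ↦
    hc_upper (mem_image2_of_mem hx hy)
  obtain ⟨b, hb⟩ := exists_mapsTo_Icc_of_forall_sub_le hs fun x hx y hy ↦
    le_sub_comm.1 (hc_lower (mem_image2_of_mem hx hy))
  exact ⟨p, q, a, a + c, b, b + (V - c), hp, hq, hpq, ha, hb, by ring⟩

lemma exists_monotone_eqOn_of_mapsTo_Icc {f : α → ℝ} {s : Set α} {a b : ℝ} (hf : MonotoneOn f s)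
    (hfs : MapsTo f s (Icc a b)) : ∃ F : α → ℝ, Monotone F ∧ EqOn f F s :=
  hf.exists_monotone_extension (bddBelow_Icc.mono hfs.image_subset)
    (bddAbove_Icc.mono hfs.image_subset)

end Order

section Measure

variable {α : Type*} [LinearOrder α] [MeasurableSpace α] {μ ν : Measure α}

/-- The Kolmogorov–Smirnov distance `sup_x |μ(-∞, x] - ν(-∞, x]|` between two measures. For finite
measures the supremum is over a bounded family, so the real-valued `⨆` takes no junk value. -/
noncomputable def kolmogorovDist (μ ν : Measure α) : ℝ :=
  ⨆ x, |μ.real (Iic x) - ν.real (Iic x)|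

lemma kolmogorovDist_nonneg : 0 ≤ kolmogorovDist μ ν :=
  Real.iSup_nonneg fun _ ↦ abs_nonneg _

lemma integrable_of_monotoneOn [TopologicalSpace α] [OrderTopology α] [SecondCountableTopology α]
    [BorelSpace α] [IsFiniteMeasure μ] {s : Set α} {f : α → ℝ} {a b : ℝ} (hμ : ∀ᵐ x ∂μ, x ∈ s)
    (hf : MonotoneOn f s) (hfs : MapsTo f s (Icc a b)) : Integrable f μ := by
  obtain ⟨F, hF, hfF⟩ := exists_monotone_eqOn_of_mapsTo_Icc hf hfs
  have hae : F =ᵐ[μ] f := hμ.mono fun _ hx ↦ (hfF hx).symm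
  exact .of_mem_Icc a b (hF.measurable.aemeasurable.congr hae) (hμ.mono hfs)

variable [IsFiniteMeasure μ] [IsFiniteMeasure ν]

lemma abs_measureReal_Iic_sub_le_kolmogorovDist (x : α) :
    |μ.real (Iic x) - ν.real (Iic x)| ≤ kolmogorovDist μ ν := by
  refine le_ciSup (f := fun x ↦ |μ.real (Iic x) - ν.real (Iic x)|)
    ⟨max (μ.real univ) (ν.real univ), ?_⟩ x
  rintro _ ⟨y, rfl⟩
  exact abs_sub_le_of_nonneg_of_le
    measureReal_nonneg ((measureReal_mono (subset_univ _)).trans (le_max_left _ _))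
    measureReal_nonneg ((measureReal_mono (subset_univ _)).trans (le_max_right _ _))

variable [TopologicalSpace α] [OrderTopology α] [SecondCountableTopology α]

lemma abs_measureReal_sub_le_kolmogorovDist_of_isLowerSet {s : Set α} (hs : IsLowerSet s) :
    |μ.real s - ν.real s| ≤ kolmogorovDist μ ν := by
  obtain ⟨T, hT, rfl⟩ := exists_countable_biUnion_Iic_eq_of_isLowerSet hs
  rcases T.eq_empty_or_nonempty with rfl | hTne
  · simpa using kolmogorovDist_nonneg
  have : Countable T := hT.to_subtype
  have : Nonempty T := hTne.to_subtype
  have htendsto (ρ : Measure α) [IsFiniteMeasure ρ] :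
      Tendsto (fun x : T ↦ ρ.real (Iic (x : α))) atTop (𝓝 (ρ.real (⋃ x ∈ T, Iic x))) := by
    rw [biUnion_eq_iUnion]
    exact (ENNReal.tendsto_toReal (measure_ne_top ρ _)).comp
      (tendsto_measure_iUnion_atTop fun _ _ hxy ↦ Iic_subset_Iic.2 hxy)
  exact le_of_tendsto ((htendsto μ).sub (htendsto ν)).abs
    (Eventually.of_forall fun x ↦ abs_measureReal_Iic_sub_le_kolmogorovDist (x : α))

variable [BorelSpace α]

lemma eq_of_kolmogorovDist_eq_zero (h : kolmogorovDist μ ν = 0) : μ = ν := by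
  refine Measure.ext_of_Iic μ ν fun x ↦ ?_
  have hx : μ.real (Iic x) = ν.real (Iic x) := sub_eq_zero.1 <| abs_nonpos_iff.1 <|
    h ▸ abs_measureReal_Iic_sub_le_kolmogorovDist x
  exact (measureReal_eq_measureReal_iff).1 hx

lemma abs_integral_sub_le_of_antitone {g : α → ℝ} {M : ℝ} (hM : 0 ≤ M) (hg : Antitone g)
    (hμ : ∀ᵐ x ∂μ, g x ∈ Icc 0 M) (hν : ∀ᵐ x ∂ν, g x ∈ Icc 0 M) :
    |∫ x, g x ∂μ - ∫ x, g x ∂ν| ≤ kolmogorovDist μ ν * M := by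
  have hlayer (ρ : Measure α) [IsFiniteMeasure ρ] (hρ : ∀ᵐ x ∂ρ, g x ∈ Icc 0 M) :
      ∫ x, g x ∂ρ = ∫ t in Ioc 0 M, ρ.real {x | t ≤ g x} :=
    (Integrable.of_mem_Icc 0 M hg.measurable.aemeasurable hρ).integral_eq_integral_Ioc_meas_le
      (hρ.mono fun _ hx ↦ hx.1) (hρ.mono fun _ hx ↦ hx.2)
  have hint (ρ : Measure α) [IsFiniteMeasure ρ] :
      IntegrableOn (fun t ↦ ρ.real {x | t ≤ g x}) (Ioc 0 M) :=
    have hanti : Antitone fun t ↦ ρ.real {x | t ≤ g x} := fun _ _ hst ↦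
      measureReal_mono fun _ hx ↦ hst.trans hx
    (hanti.antitoneOn _).integrableOn_isCompact isCompact_Icc |>.mono_set Ioc_subset_Icc_self
  have hlower (t : ℝ) : IsLowerSet {x | t ≤ g x} := fun _ _ hyx hx ↦ le_trans hx (hg hyx)
  rw [hlayer μ hμ, hlayer ν hν, ← integral_sub (hint μ) (hint ν), ← Real.norm_eq_abs]
  calc ‖∫ t in Ioc 0 M, (μ.real {x | t ≤ g x} - ν.real {x | t ≤ g x})‖
      ≤ kolmogorovDist μ ν * volume.real (Ioc 0 M) :=
        norm_setIntegral_le_of_norm_le_const measure_Ioc_lt_top fun t _ ↦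
          abs_measureReal_sub_le_kolmogorovDist_of_isLowerSet (hlower t)
    _ = kolmogorovDist μ ν * M := by rw [Real.volume_real_Ioc_of_le hM, sub_zero]

variable {s : Set α} {f : α → ℝ} {a b : ℝ}

lemma abs_integral_sub_le_of_monotoneOn (hmass : μ.real univ = ν.real univ) (hs : s.Nonempty)
    (hμ : ∀ᵐ x ∂μ, x ∈ s) (hν : ∀ᵐ x ∂ν, x ∈ s)
    (hf : MonotoneOn f s) (hfs : MapsTo f s (Icc a b)) :
    |∫ x, f x ∂μ - ∫ x, f x ∂ν| ≤ kolmogorovDist μ ν * (b - a) := by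
  obtain ⟨F, hF, hfF⟩ := exists_monotone_eqOn_of_mapsTo_Icc hf hfs
  obtain ⟨x₀, hx₀⟩ := hs
  have hab : a ≤ b := (hfs hx₀).left.trans (hfs hx₀).right
  have hbound : ∀ x ∈ s, b - F x ∈ Icc 0 (b - a) := fun x hx ↦ by
    rw [← hfF hx]
    exact ⟨sub_nonneg.2 (hfs hx).2, sub_le_sub_left (hfs hx).1 b⟩
  have hint (ρ : Measure α) [IsFiniteMeasure ρ] (hρ : ∀ᵐ x ∂ρ, x ∈ s) :
      ∫ x, (b - F x) ∂ρ = ρ.real univ * b - ∫ x, f x ∂ρ := by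
    rw [integral_congr_ae (hρ.mono fun x hx ↦ congrArg (b - ·) (hfF hx).symm),
      integral_sub (integrable_const b) (integrable_of_monotoneOn hρ hf hfs), integral_const,
      smul_eq_mul]
  have key := abs_integral_sub_le_of_antitone (sub_nonneg.2 hab)
    (fun _ _ hxy ↦ sub_le_sub_left (hF hxy) b) (hμ.mono hbound) (hν.mono hbound)
  rwa [hint μ hμ, hint ν hν, hmass, sub_sub_sub_cancel_left, abs_sub_comm] at key

lemma abs_integral_sub_le_of_boundedVariationOn (hmass : μ.real univ = ν.real univ)
    (hs : s.Nonempty) (hμ : ∀ᵐ x ∂μ, x ∈ s) (hν : ∀ᵐ x ∂ν, x ∈ s) (hf : BoundedVariationOn f s) :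
    |∫ x, f x ∂μ - ∫ x, f x ∂ν| ≤ kolmogorovDist μ ν * (eVariationOn f s).toReal := by
  obtain ⟨p, q, a, b, c, d, hp, hq, hpq, hps, hqs, hosc⟩ :=
    exists_monotoneOn_sub_mapsTo_Icc hs hf
  have hint (ρ : Measure α) [IsFiniteMeasure ρ] (hρ : ∀ᵐ x ∂ρ, x ∈ s) :
      ∫ x, f x ∂ρ = ∫ x, p x ∂ρ - ∫ x, q x ∂ρ := by
    rw [hpq]
    exact integral_sub (integrable_of_monotoneOn hρ hp hps) (integrable_of_monotoneOn hρ hq hqs)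
  calc |∫ x, f x ∂μ - ∫ x, f x ∂ν|
      = |(∫ x, p x ∂μ - ∫ x, p x ∂ν) - (∫ x, q x ∂μ - ∫ x, q x ∂ν)| := by
        rw [hint μ hμ, hint ν hν, sub_sub_sub_comm]
    _ ≤ |∫ x, p x ∂μ - ∫ x, p x ∂ν| + |∫ x, q x ∂μ - ∫ x, q x ∂ν| := abs_sub _ _
    _ ≤ kolmogorovDist μ ν * (b - a) + kolmogorovDist μ ν * (d - c) :=
        add_le_add (abs_integral_sub_le_of_monotoneOn hmass hs hμ hν hp hps)
          (abs_integral_sub_le_of_monotoneOn hmass hs hμ hν hq hqs)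
    _ = kolmogorovDist μ ν * (eVariationOn f s).toReal := by rw [← mul_add, hosc]

end Measure

lemma exists_continuous_bounded_extension {X : Type*} [TopologicalSpace X] [NormalSpace X]
    {A : Set X} (hA : IsClosed A) {h : X → ℝ} (hcont : ContinuousOn h A)
    (hbdd : ∃ M : ℝ, ∀ x ∈ A, |h x| ≤ M) :
    ∃ g : X → ℝ, Continuous g ∧ (∃ M : ℝ, ∀ x, |g x| ≤ M) ∧ EqOn g h A := by
  obtain ⟨M, hM⟩ := hbdd
  let hRestrict : BoundedContinuousFunction A ℝ :=
    .ofNormedAddCommGroup (A.domRestrict h) hcont.domRestrict M fun x ↦ hM x x.2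
  obtain ⟨g, -, hg⟩ :=
    BoundedContinuousFunction.exists_norm_eq_domRestrict_eq_of_closed hRestrict hA
  exact ⟨g, g.continuous, ⟨‖g‖, g.norm_coe_le_norm⟩, fun x hx ↦ DFunLike.congr_fun hg ⟨x, hx⟩⟩

theorem kolmogorov_smirnov_bound_general {α : Type*} [LinearOrder α] [TopologicalSpace α]
    [OrderTopology α] [SecondCountableTopology α] [MeasurableSpace α] [BorelSpace α]
    (μ ν : Measure α) [IsFiniteMeasure μ] [IsFiniteMeasure ν] (hmass : μ.real univ = ν.real univ)
    (A : Set α) (hμ : μ Aᶜ = 0) (hν : ν Aᶜ = 0) (h : α → ℝ) :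
    ENNReal.ofReal |(∫ x in A, h x ∂μ) - ∫ x in A, h x ∂ν| ≤
      ENNReal.ofReal (kolmogorovDist μ ν) * eVariationOn h A := by
  rcases A.eq_empty_or_nonempty with rfl | hA
  · simp
  rcases kolmogorovDist_nonneg (μ := μ) (ν := ν) |>.eq_or_lt with hzero | hpos
  · simp [eq_of_kolmogorovDist_eq_zero hzero.symm]
  by_cases hV : eVariationOn h A = ⊤
  · simp [hV, ENNReal.mul_top, hpos]
  rw [Measure.restrict_eq_self_of_ae_mem (mem_ae_iff.2 hμ),
    Measure.restrict_eq_self_of_ae_mem (mem_ae_iff.2 hν), ← ENNReal.ofReal_toReal hV,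
    ← ENNReal.ofReal_mul hpos.le]
  exact ENNReal.ofReal_le_ofReal <|
    abs_integral_sub_le_of_boundedVariationOn hmass hA (mem_ae_iff.2 hμ) (mem_ae_iff.2 hν) hV

/-- **Kolmogorov–Smirnov bound**: for probability measures `G¹, G⁰` on `ℝ` supported in a closed
set `A` and `h` continuous and bounded on `A`, the set `H` of continuous bounded extensions of `h`
is nonempty and
`|∫_A h dG¹ − ∫_A h dG⁰| ≤ (sup_x |F₁(x) − F₀(x)|) · inf_{g ∈ H} V(g)`,
where `V(g)` is the total variation of `g` over `ℝ`. -/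
theorem kolmogorov_smirnov_bound
    (G1 G0 : Measure ℝ) [IsProbabilityMeasure G1] [IsProbabilityMeasure G0]
    (A : Set ℝ) (hA : IsClosed A)
    (hsupp1 : G1 Aᶜ = 0) (hsupp0 : G0 Aᶜ = 0)
    (h : ℝ → ℝ) (hcont : ContinuousOn h A) (hbdd : ∃ M : ℝ, ∀ x ∈ A, |h x| ≤ M) :
    (ksExtensions A h).Nonempty ∧
      ENNReal.ofReal |(∫ x in A, h x ∂G1) - ∫ x in A, h x ∂G0| ≤
        ENNReal.ofReal
            (⨆ x : ℝ, |(G1 (Set.Iic x)).toReal - (G0 (Set.Iic x)).toReal|) *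
          ⨅ g ∈ ksExtensions A h, eVariationOn g Set.univ := by
  refine ⟨exists_continuous_bounded_extension hA hcont hbdd,
    (kolmogorov_smirnov_bound_general G1 G0 (by simp) A hsupp1 hsupp0 h).trans ?_⟩
  refine mul_le_mul_right (le_iInf₂ fun g ⟨_, _, hgh⟩ ↦ ?_) _
  calc eVariationOn h A = eVariationOn g A := (eVariationOn.congr hgh).symm
    _ ≤ eVariationOn g univ := eVariationOn.mono g (subset_univ A)
end

section
/- (Mean difference bound) Let G¹ and G⁰ be probability measures on ℝ^p with finite supports 𝒳¹ and 𝒳⁰ respectively, let r : ℝ^p → ℝ^J be a vector of summary functions, and let h : ℝ^p → ℝ. Suppose that for each σ ∈ {+1, −1} there exist ζ_σ ∈ ℝ^J and nonnegative slack functions ξ_σ¹ : 𝒳¹ → [0,∞) and ξ_σ⁰ : 𝒳⁰ → [0,∞) such that σ·h(x) ≤ σ·(r(x)⋅ζ_σ) + ξ_σ¹(x) for every x ∈ 𝒳¹ and σ·h(x) ≥ σ·(r(x)⋅ζ_σ) − ξ_σ⁰(x) for every x ∈ 𝒳⁰. Let c ∈ ℝ^J be the vector with components c_j = |∫ r_j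 dG¹ − ∫ r_j dG⁰|, and let |ζ| denote the componentwise absolute value of ζ. Then −|ζ_{−1}|⋅c − Σ_{d∈{0,1}} ∫ ξ_{−1}^d dG^d ≤ ∫ h dG¹ − ∫ h dG⁰ ≤ |ζ₁|⋅c + Σ_{d∈{0,1}} ∫ ξ₁^d dG^d; in particular |∫ h dG¹ − ∫ h dG⁰| ≤ (max(|ζ₁|, |ζ_{−1}|) componentwise)⋅c + Σ_{σ=±1} Σ_{d∈{0,1}} ∫ ξ_σ^d dG^d. (In the paper, with h the misspecification function f₀ − l_θ(·,0), ∫ h d(G¹−G⁰) equals the regression bias β − τ.) -/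
open MeasureTheory

/-!
Integrating the two constraints on `h`, each against its own measure, bounds the mean difference
of `h` by that of the separating functional `r(·)⋅ζ`, up to the mean slacks. The latter is `ζ`
paired with the mean differences of the summaries, hence at most `|ζ|⋅c`. The constraints for
`σ = −1` are those for `σ = +1` with the two measures exchanged, and `c` is symmetric in them.
-/

section FiniteSupport

variable {E F : Type*} [MeasurableSpace E] [MeasurableSingletonClass E] [NormedAddCommGroup F]
  {μ : Measure E} [IsFiniteMeasure μ] {s : Set E}

lemma integrable_of_finite_of_ae_mem (hs : s.Finite) (hμ : ∀ᵐ x ∂μ, x ∈ s) (f : E → F) :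
    Integrable f μ := by
  rw [← Measure.restrict_eq_self_of_ae_mem hμ]
  exact IntegrableOn.of_finite hs

end FiniteSupport

section MeanDifference

variable {E ι : Type*} [MeasurableSpace E] [Fintype ι] {μ ν : Measure E} {r : E → ι → ℝ}
  {g h ξμ ξν : E → ℝ}

lemma integral_sub_integral_le_of_ae_le_add_of_ae_sub_le
    (hhμ : Integrable h μ) (hhν : Integrable h ν) (hgμ : Integrable g μ) (hgν : Integrable g ν)
    (hξμ : Integrable ξμ μ) (hξν : Integrable ξν ν)
    (hle : ∀ᵐ x ∂μ, h x ≤ g x + ξμ x) (hge : ∀ᵐ x ∂ν, g x - ξν x ≤ h x) :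
    (∫ x, h x ∂μ) - ∫ x, h x ∂ν
      ≤ ((∫ x, g x ∂μ) - ∫ x, g x ∂ν) + ((∫ x, ξμ x ∂μ) + ∫ x, ξν x ∂ν) := by
  have upper : ∫ x, h x ∂μ ≤ (∫ x, g x ∂μ) + ∫ x, ξμ x ∂μ :=
    (integral_mono_ae hhμ (hgμ.add hξμ) hle).trans_eq (integral_add hgμ hξμ)
  have lower : (∫ x, g x ∂ν) - ∫ x, ξν x ∂ν ≤ ∫ x, h x ∂ν :=
    (integral_sub hgν hξν).symm.trans_le (integral_mono_ae (hgν.sub hξν) hhν hge)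
  linarith

lemma integrable_sum_mul_const (hr : ∀ j, Integrable (fun x ↦ r x j) μ) (ζ : ι → ℝ) :
    Integrable (fun x ↦ ∑ j, r x j * ζ j) μ :=
  integrable_finsetSum _ fun j _ ↦ (hr j).mul_const (ζ j)

lemma integral_sum_mul_const (hr : ∀ j, Integrable (fun x ↦ r x j) μ) (ζ : ι → ℝ) :
    ∫ x, ∑ j, r x j * ζ j ∂μ = ∑ j, (∫ x, r x j ∂μ) * ζ j := by
  rw [integral_finsetSum _ fun j _ ↦ (hr j).mul_const (ζ j)]
  simp only [integral_mul_const]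

lemma integral_sum_mul_const_sub_le (hrμ : ∀ j, Integrable (fun x ↦ r x j) μ)
    (hrν : ∀ j, Integrable (fun x ↦ r x j) ν) (ζ : ι → ℝ) :
    (∫ x, ∑ j, r x j * ζ j ∂μ) - ∫ x, ∑ j, r x j * ζ j ∂ν
      ≤ ∑ j, |ζ j| * |(∫ x, r x j ∂μ) - ∫ x, r x j ∂ν| :=
  calc (∫ x, ∑ j, r x j * ζ j ∂μ) - ∫ x, ∑ j, r x j * ζ j ∂ν
    _ = ∑ j, ζ j * ((∫ x, r x j ∂μ) - ∫ x, r x j ∂ν) := by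
      rw [integral_sum_mul_const hrμ, integral_sum_mul_const hrν, ← Finset.sum_sub_distrib]
      exact Finset.sum_congr rfl fun j _ ↦ by ring
    _ ≤ ∑ j, |ζ j| * |(∫ x, r x j ∂μ) - ∫ x, r x j ∂ν| :=
      Finset.sum_le_sum fun j _ ↦ (le_abs_self _).trans_eq (abs_mul _ _)

lemma integral_sub_integral_le_of_separating {ζ : ι → ℝ}
    (hrμ : ∀ j, Integrable (fun x ↦ r x j) μ) (hrν : ∀ j, Integrable (fun x ↦ r x j) ν)
    (hhμ : Integrable h μ) (hhν : Integrable h ν)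
    (hξμ : Integrable ξμ μ) (hξν : Integrable ξν ν)
    (hle : ∀ᵐ x ∂μ, h x ≤ (∑ j, r x j * ζ j) + ξμ x)
    (hge : ∀ᵐ x ∂ν, (∑ j, r x j * ζ j) - ξν x ≤ h x) :
    (∫ x, h x ∂μ) - ∫ x, h x ∂ν
      ≤ (∑ j, |ζ j| * |(∫ x, r x j ∂μ) - ∫ x, r x j ∂ν|)
        + ((∫ x, ξμ x ∂μ) + ∫ x, ξν x ∂ν) :=
  (integral_sub_integral_le_of_ae_le_add_of_ae_sub_le hhμ hhν (integrable_sum_mul_const hrμ ζ)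
    (integrable_sum_mul_const hrν ζ) hξμ hξν hle hge).trans
    (add_le_add_left (integral_sum_mul_const_sub_le hrμ hrν ζ) _)

theorem mean_difference_bound_general {ζ ζ' c : ι → ℝ} {ξμ' ξν' : E → ℝ}
    (hrμ : ∀ j, Integrable (fun x ↦ r x j) μ) (hrν : ∀ j, Integrable (fun x ↦ r x j) ν)
    (hhμ : Integrable h μ) (hhν : Integrable h ν)
    (hξμ : Integrable ξμ μ) (hξν : Integrable ξν ν)
    (hξμ' : Integrable ξμ' μ) (hξν' : Integrable ξν' ν)
    (hξμ_nonneg : ∀ᵐ x ∂μ, 0 ≤ ξμ x) (hξν_nonneg : ∀ᵐ x ∂ν, 0 ≤ ξν x)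
    (hξμ'_nonneg : ∀ᵐ x ∂μ, 0 ≤ ξμ' x) (hξν'_nonneg : ∀ᵐ x ∂ν, 0 ≤ ξν' x)
    (hle : ∀ᵐ x ∂μ, h x ≤ (∑ j, r x j * ζ j) + ξμ x)
    (hge : ∀ᵐ x ∂ν, (∑ j, r x j * ζ j) - ξν x ≤ h x)
    (hle' : ∀ᵐ x ∂μ, -h x ≤ -(∑ j, r x j * ζ' j) + ξμ' x)
    (hge' : ∀ᵐ x ∂ν, -(∑ j, r x j * ζ' j) - ξν' x ≤ -h x)
    (hc : ∀ j, c j = |(∫ x, r x j ∂μ) - ∫ x, r x j ∂ν|) :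
    (-(∑ j, |ζ' j| * c j) - ((∫ x, ξμ' x ∂μ) + ∫ x, ξν' x ∂ν)
        ≤ (∫ x, h x ∂μ) - ∫ x, h x ∂ν) ∧
    ((∫ x, h x ∂μ) - ∫ x, h x ∂ν
        ≤ (∑ j, |ζ j| * c j) + ((∫ x, ξμ x ∂μ) + ∫ x, ξν x ∂ν)) ∧
    (|(∫ x, h x ∂μ) - ∫ x, h x ∂ν|
        ≤ (∑ j, max |ζ j| |ζ' j| * c j)
          + ((∫ x, ξμ x ∂μ) + (∫ x, ξν x ∂ν) + (∫ x, ξμ' x ∂μ) + ∫ x, ξν' x ∂ν)) := by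
  have upper := integral_sub_integral_le_of_separating hrμ hrν hhμ hhν hξμ hξν hle hge
  have lower := integral_sub_integral_le_of_separating (ζ := ζ') hrν hrμ hhν hhμ hξν' hξμ'
    (hge'.mono fun x hx ↦ by linarith) (hle'.mono fun x hx ↦ by linarith)
  simp only [abs_sub_comm (∫ x, r x _ ∂ν), ← hc] at upper lower
  have hc_nonneg (j : ι) : 0 ≤ c j := hc j ▸ abs_nonneg _
  have le_max_sum : ∑ j, |ζ j| * c j ≤ ∑ j, max |ζ j| |ζ' j| * c j :=
    Finset.sum_le_sum fun j _ ↦ mul_le_mul_of_nonneg_right (le_max_left _ _) (hc_nonneg j)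
  have le_max_sum' : ∑ j, |ζ' j| * c j ≤ ∑ j, max |ζ j| |ζ' j| * c j :=
    Finset.sum_le_sum fun j _ ↦ mul_le_mul_of_nonneg_right (le_max_right _ _) (hc_nonneg j)
  have slack_nonneg : 0 ≤ (∫ x, ξμ x ∂μ) + ∫ x, ξν x ∂ν :=
    add_nonneg (integral_nonneg_of_ae hξμ_nonneg) (integral_nonneg_of_ae hξν_nonneg)
  have slack_nonneg' : 0 ≤ (∫ x, ξμ' x ∂μ) + ∫ x, ξν' x ∂ν :=
    add_nonneg (integral_nonneg_of_ae hξμ'_nonneg) (integral_nonneg_of_ae hξν'_nonneg)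
  exact ⟨by linarith, upper, abs_le.mpr ⟨by linarith, by linarith⟩⟩

end MeanDifference

/-- **Mean difference bound**: for finitely supported probability measures `G¹, G⁰` on `ℝ^p`,
summaries `r`, and (noisy) separating functionals `r(·)⋅ζ_σ` with slacks `ξ_σ^d`,
the difference `∫ h dG¹ − ∫ h dG⁰` is bounded below by
`−|ζm|⋅c − Σ_d ∫ ξ₋₁^d dG^d` and above by `|ζ1|⋅c + Σ_d ∫ ξ₁^d dG^d`;
in particular its absolute value is at most
`(max(|ζ1|,|ζm|))⋅c + Σ_σ Σ_d ∫ ξ_σ^d dG^d`. -/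
theorem mean_difference_bound
    {p J : ℕ} (G1 G0 : Measure (EuclideanSpace ℝ (Fin p)))
    [IsProbabilityMeasure G1] [IsProbabilityMeasure G0]
    (X1 X0 : Set (EuclideanSpace ℝ (Fin p))) (hX1fin : X1.Finite) (hX0fin : X0.Finite)
    (hsupp1 : G1 X1ᶜ = 0) (hsupp0 : G0 X0ᶜ = 0)
    (r : EuclideanSpace ℝ (Fin p) → Fin J → ℝ) (h : EuclideanSpace ℝ (Fin p) → ℝ)
    (ζ1 ζm : Fin J → ℝ)
    (ξ1X1 ξ1X0 ξmX1 ξmX0 : EuclideanSpace ℝ (Fin p) → ℝ)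
    (hxi1X1 : ∀ x ∈ X1, 0 ≤ ξ1X1 x) (hxi1X0 : ∀ x ∈ X0, 0 ≤ ξ1X0 x)
    (hximX1 : ∀ x ∈ X1, 0 ≤ ξmX1 x) (hximX0 : ∀ x ∈ X0, 0 ≤ ξmX0 x)
    -- σ = +1 separation constraints
    (hsep1a : ∀ x ∈ X1, h x ≤ (∑ j, r x j * ζ1 j) + ξ1X1 x)
    (hsep1b : ∀ x ∈ X0, (∑ j, r x j * ζ1 j) - ξ1X0 x ≤ h x)
    -- σ = −1 separation constraints
    (hsepma : ∀ x ∈ X1, -h x ≤ -(∑ j, r x j * ζm j) + ξmX1 x)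
    (hsepmb : ∀ x ∈ X0, -(∑ j, r x j * ζm j) - ξmX0 x ≤ -h x)
    -- componentwise absolute mean differences of the summaries
    (c : Fin J → ℝ)
    (hc : ∀ j, c j = |(∫ x, r x j ∂G1) - ∫ x, r x j ∂G0|) :
    (-(∑ j, |ζm j| * c j) - ((∫ x, ξmX1 x ∂G1) + ∫ x, ξmX0 x ∂G0)
        ≤ (∫ x, h x ∂G1) - ∫ x, h x ∂G0) ∧
    ((∫ x, h x ∂G1) - ∫ x, h x ∂G0
        ≤ (∑ j, |ζ1 j| * c j) + ((∫ x, ξ1X1 x ∂G1) + ∫ x, ξ1X0 x ∂G0)) ∧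
    (|(∫ x, h x ∂G1) - ∫ x, h x ∂G0|
        ≤ (∑ j, max |ζ1 j| |ζm j| * c j)
          + ((∫ x, ξ1X1 x ∂G1) + (∫ x, ξ1X0 x ∂G0)
            + (∫ x, ξmX1 x ∂G1) + ∫ x, ξmX0 x ∂G0)) := by
  have ae1 : ∀ᵐ x ∂G1, x ∈ X1 := mem_ae_iff.mpr hsupp1
  have ae0 : ∀ᵐ x ∂G0, x ∈ X0 := mem_ae_iff.mpr hsupp0
  have int1 (f : EuclideanSpace ℝ (Fin p) → ℝ) := integrable_of_finite_of_ae_mem hX1fin ae1 f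
  have int0 (f : EuclideanSpace ℝ (Fin p) → ℝ) := integrable_of_finite_of_ae_mem hX0fin ae0 f
  exact mean_difference_bound_general (fun _ ↦ int1 _) (fun _ ↦ int0 _) (int1 _) (int0 _)
    (int1 _) (int0 _) (int1 _) (int0 _) (ae1.mono hxi1X1) (ae0.mono hxi1X0) (ae1.mono hximX1)
    (ae0.mono hximX0) (ae1.mono hsep1a) (ae0.mono hsep1b) (ae1.mono hsepma) (ae0.mono hsepmb) hc
end

section
/- (Size distortion bounds under local misspecification) In the triangular-array least squares setting, suppose Σ_n^{-1/2} √k_n (θ̂_n − θ_n) converges in distribution to N(0, I_q), let β̂_n and β_n denote the second coordinates of θ̂_n and θ_n, let σ_n² := (Σ_n)_{2,2} (bounded above and below away from 0), and let se_n be positive random variables with √k_n · se_n / σ_n → 1 in probability (e.g. se_n = √((Σ̂_n)_{2,2}/k_n) with the consistent matching-based variance estimator). Fix v > 0 and deterministic reals τ_n with |β_n − τ_n| ≤ v/√k_n, and define the t-statistic t_n := (β̂_n − τ_n)/se_n. Then for every z ∈ ℝ: Φ(z) ≤ liminf_n P[t_n − v/(√k_n · se_n) ≤ z] and limsup_n P[t_n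 + v/(√k_n · se_n) ≤ z] ≤ Φ(z), where Φ is the standard normal cumulative distribution function. -/
/-!
Write `X_n = A_n⁻¹ √k_n (θ̂_n − θ_n)` with `A_n A_nᵀ = Σ_n`. The normalized error
`√k_n (β̂_n − β_n) / σ_n` is the projection of `X_n` on the normalized `β`-row of `A_n`. This unit
vector varies with `n` and need not converge, but the unit sphere is compact and every projection
of a standard Gaussian vector on a unit vector is `N(0, 1)`; so every cluster point of the laws of
the normalized errors, hence their limit, is `N(0, 1)`.

Since `(β̂_n − β_n) / se_n ≤ z` says that the normalized error is at most
`z · √k_n se_n / σ_n`, a random threshold tending to `z` in probability, the studentized error has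
limiting distribution function `Φ`. The bias bound `|β_n − τ_n| ≤ v / √k_n` places it between
`t_n − v / (√k_n se_n)` and `t_n + v / (√k_n se_n)`.
-/

open MeasureTheory Filter

/-- The standard normal cumulative distribution function `Φ`. -/
noncomputable def stdGaussianCdf (t : ℝ) : ℝ :=
  ((ProbabilityTheory.gaussianReal 0 1) (Set.Iic t)).toReal

open ProbabilityTheory Matrix Set TopologicalSpace WithLp
open scoped ENNReal Topology

section EventSequence

variable {ι : Type*} {l : Filter ι} {Ω : ι → Type*} [∀ n, MeasurableSpace (Ω n)]
  {μ : ∀ n, Measure (Ω n)} {s t u : ∀ n, Set (Ω n)} {a b : ℝ≥0∞}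

lemma eventually_lt_measure_of_subset_union (hs : Tendsto (fun n => μ n (s n)) l (𝓝 a))
    (hu : Tendsto (fun n => μ n (u n)) l (𝓝 0)) (hsub : ∀ n, s n ⊆ t n ∪ u n) (hb : b < a) :
    ∀ᶠ n in l, b < μ n (t n) := by
  have hdiff : Tendsto (fun n => μ n (s n) - μ n (u n)) l (𝓝 a) := by
    simpa using ENNReal.Tendsto.sub hs hu (Or.inr ENNReal.zero_ne_top)
  filter_upwards [hdiff.eventually_const_lt hb] with n hn
  exact hn.trans_le (tsub_le_iff_right.2 ((measure_mono (hsub n)).trans (measure_union_le _ _)))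

lemma eventually_measure_lt_of_subset_union (hs : Tendsto (fun n => μ n (s n)) l (𝓝 a))
    (hu : Tendsto (fun n => μ n (u n)) l (𝓝 0)) (hsub : ∀ n, t n ⊆ s n ∪ u n) (hb : a < b) :
    ∀ᶠ n in l, μ n (t n) < b := by
  have hsum : Tendsto (fun n => μ n (s n) + μ n (u n)) l (𝓝 a) := by
    simpa using hs.add hu
  filter_upwards [hsum.eventually_lt_const hb] with n hn
  exact ((measure_mono (hsub n)).trans (measure_union_le _ _)).trans_lt hn

lemma tendsto_measure_le_abs_const_mul_sub {Y : ∀ n, Ω n → ℝ} {c : ℝ} (d : ℝ)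
    (hY : ∀ ε > 0, Tendsto (fun n => μ n {ω | ε ≤ |Y n ω - c|}) l (𝓝 0)) {ε : ℝ} (hε : 0 < ε) :
    Tendsto (fun n => μ n {ω | ε ≤ |d * Y n ω - d * c|}) l (𝓝 0) := by
  refine tendsto_of_tendsto_of_tendsto_of_le_of_le tendsto_const_nhds
    (hY (ε / (|d| + 1)) (by positivity)) (fun n => zero_le) fun n => measure_mono fun ω hω => ?_
  rw [mem_ofPred_eq, div_le_iff₀' (by positivity)]
  calc ε ≤ |d * Y n ω - d * c| := hω
    _ = |d| * |Y n ω - c| := by rw [← mul_sub, abs_mul]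
    _ ≤ (|d| + 1) * |Y n ω - c| := by gcongr; linarith

end EventSequence

lemma continuous_measure_Iic {α : Type*} [LinearOrder α] [TopologicalSpace α]
    [OrderTopology α] [FirstCountableTopology α] [MeasurableSpace α]
    [OpensMeasurableSpace α] (ρ : Measure α) [IsFiniteMeasure ρ] [NullSingletonClass ρ] :
    Continuous fun x => ρ (Iic x) := by
  refine continuous_iff_continuousAt.2 fun x => ?_
  refine tendsto_measure_of_ae_tendsto_indicator_of_isFiniteMeasure (𝓝 x) measurableSet_Iic
    (fun _ => measurableSet_Iic) ?_
  filter_upwards [compl_mem_ae_iff.2 (measure_singleton x)] with y hy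
  rcases lt_or_gt_of_ne hy with hyx | hxy
  · filter_upwards [lt_mem_nhds hyx] with z hz
    exact iff_of_true hz.le hyx.le
  · filter_upwards [gt_mem_nhds hxy] with z hz
    exact iff_of_false hz.not_ge hxy.not_ge

lemma dirac_prod_map {Ω E Y : Type*} [MeasurableSpace Ω] [MeasurableSpace E] [MeasurableSpace Y]
    {μ : Measure Ω} [SFinite μ] {X : Ω → E} (y : Y) (hX : AEMeasurable X μ) :
    (Measure.dirac y).prod (μ.map X) = μ.map fun ω => (y, X ω) := by
  rw [Measure.dirac_prod, AEMeasurable.map_map_of_aemeasurable (by fun_prop) hX]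
  rfl

section ConvergenceInDistribution

variable {ι : Type*} {l : Filter ι} {Ω : ι → Type*} [∀ n, MeasurableSpace (Ω n)]
  {μ : ∀ n, Measure (Ω n)} [∀ n, IsProbabilityMeasure (μ n)]
  {Ω' : Type*} [MeasurableSpace Ω'] {μ' : Measure Ω'} [IsProbabilityMeasure μ']

lemma tendstoInDistribution_of_forall_integral_tendsto {E : Type*} [TopologicalSpace E]
    [MeasurableSpace E] [OpensMeasurableSpace E] {X : ∀ n, Ω n → E} {Z : Ω' → E}
    (hX : ∀ n, AEMeasurable (X n) (μ n)) (hZ : AEMeasurable Z μ')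
    (h : ∀ f : E → ℝ, Continuous f → (∃ C, ∀ x, |f x| ≤ C) →
      Tendsto (fun n => ∫ ω, f (X n ω) ∂μ n) l (𝓝 (∫ ω, f (Z ω) ∂μ'))) :
    TendstoInDistribution X l Z μ μ' where
  forall_aemeasurable := hX
  aemeasurable_limit := hZ
  tendsto := by
    refine ProbabilityMeasure.tendsto_iff_forall_integral_tendsto.2 fun f => ?_
    simp only [ProbabilityMeasure.coe_mk,
      integral_map (hX _) f.continuous.aestronglyMeasurable,
      integral_map hZ f.continuous.aestronglyMeasurable]
    exact h f f.continuous ⟨‖f‖, f.norm_coe_le_norm⟩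

section Parameter

variable {E Y : Type*} [TopologicalSpace E] [PseudoMetrizableSpace E]
  [SecondCountableTopology E] [MeasurableSpace E] [OpensMeasurableSpace E]
  [TopologicalSpace Y] [PseudoMetrizableSpace Y] [SecondCountableTopology Y]
  [MeasurableSpace Y] [OpensMeasurableSpace Y] {X : ∀ n, Ω n → E} {Z : Ω' → E} {u : ι → Y} {y : Y}

lemma tendstoInDistribution_prodMk_left (hX : TendstoInDistribution X l Z μ μ')
    (hu : Tendsto u l (𝓝 y)) :
    TendstoInDistribution (fun n ω => (u n, X n ω)) l (fun ω => (y, Z ω)) μ μ' where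
  forall_aemeasurable n := aemeasurable_const.prodMk (hX.forall_aemeasurable n)
  aemeasurable_limit := aemeasurable_const.prodMk hX.aemeasurable_limit
  tendsto := by
    have hpair := (ProbabilityMeasure.continuous_prod.tendsto (diracProba y, _)).comp
      (((continuous_diracProba.tendsto y).comp hu).prodMk_nhds hX.tendsto)
    convert! hpair using 2
    · exact congrArg Tendsto <| funext fun n =>
        Subtype.ext (dirac_prod_map (u n) (hX.forall_aemeasurable n)).symm
    · exact congrArg 𝓝 (Subtype.ext (dirac_prod_map y hX.aemeasurable_limit).symm)

theorem tendstoInDistribution_comp_of_mem_isCompact {F : Type*} [TopologicalSpace F]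
    [MeasurableSpace F] [BorelSpace F] {Ω'' : Type*} [MeasurableSpace Ω'']
    {ν : Measure Ω''} [IsProbabilityMeasure ν] {T : Ω'' → F} {K : Set Y} {g : Y → E → F}
    (hX : TendstoInDistribution X l Z μ μ') (hT : AEMeasurable T ν) (hK : IsCompact K)
    (hu : ∀ n, u n ∈ K) (hg : Continuous (Function.uncurry g))
    (hlaw : ∀ y ∈ K, μ'.map (fun ω => g y (Z ω)) = ν.map T) :
    TendstoInDistribution (fun n ω => g (u n) (X n ω)) l T μ ν where
  forall_aemeasurable n := hg.uncurry_left (u n) |>.measurable.comp_aemeasurable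
    (hX.forall_aemeasurable n)
  aemeasurable_limit := hT
  tendsto := by
    -- Along an ultrafilter the parameters converge, by compactness of `K`.
    refine tendsto_iff_ultrafilter _ _ _ |>.2 fun f hf => ?_
    obtain ⟨y, hyK, hy⟩ := hK.ultrafilter_le_nhds (f.map u)
      (le_principal_iff.2 (Ultrafilter.mem_map.2 (Filter.univ_mem' hu)))
    have hXf : TendstoInDistribution X f Z μ μ' := ⟨hX.1, hX.2, hX.3.mono_left hf⟩
    have hgf := ((tendstoInDistribution_prodMk_left hXf hy).continuous_comp hg).tendsto
    convert! hgf using 2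
    exact congrArg 𝓝 (Subtype.ext (hlaw y hyK).symm)

end Parameter

theorem tendsto_measure_le_of_tendstoInDistribution {X Y : ∀ n, Ω n → ℝ} {Z : Ω' → ℝ} {c : ℝ}
    [NullSingletonClass (μ'.map Z)] (hX : TendstoInDistribution X l Z μ μ')
    (hY : ∀ ε > 0, Tendsto (fun n => μ n {ω | ε ≤ |Y n ω - c|}) l (𝓝 0)) :
    Tendsto (fun n => μ n {ω | X n ω ≤ Y n ω}) l (𝓝 (μ'.map Z (Iic c))) := by
  have : IsProbabilityMeasure (μ'.map Z) := Measure.isProbabilityMeasure_map hX.aemeasurable_limit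
  have hcdf : ∀ x, Tendsto (fun n => μ n {ω | X n ω ≤ x}) l (𝓝 (μ'.map Z (Iic x))) := fun x => by
    refine (ProbabilityMeasure.tendsto_measure_of_null_frontier_of_tendsto' hX.tendsto
      (E := Iic x) (by simp)).congr fun n => ?_
    exact Measure.map_apply_of_aemeasurable (hX.forall_aemeasurable n) measurableSet_Iic
  have hcont := continuous_measure_Iic (μ'.map Z)
  refine tendsto_order.2 ⟨fun b hb => ?_, fun b hb => ?_⟩
  · have hlim : Tendsto (fun δ => μ'.map Z (Iic (c - δ))) (𝓝[>] 0) (𝓝 (μ'.map Z (Iic c))) :=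
      ((hcont.comp (continuous_sub_left c)).tendsto' 0 _ (by simp)).mono_left inf_le_left
    obtain ⟨δ, hbδ, hδ⟩ := ((hlim.eventually_const_lt hb).and self_mem_nhdsWithin).exists
    refine eventually_lt_measure_of_subset_union (hcdf (c - δ)) (hY δ hδ) (fun n ω hω => ?_) hbδ
    by_contra! h
    simp only [mem_ofPred_eq, mem_union, not_or, not_le, abs_lt] at h hω
    linarith
  · have hlim : Tendsto (fun δ => μ'.map Z (Iic (c + δ))) (𝓝[>] 0) (𝓝 (μ'.map Z (Iic c))) :=
      ((hcont.comp (continuous_const_add c)).tendsto' 0 _ (by simp)).mono_left inf_le_left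
    obtain ⟨δ, hbδ, hδ⟩ := ((hlim.eventually_lt_const hb).and self_mem_nhdsWithin).exists
    refine eventually_measure_lt_of_subset_union (hcdf (c + δ)) (hY δ hδ) (fun n ω hω => ?_) hbδ
    by_contra! h
    simp only [mem_ofPred_eq, mem_union, not_or, not_le, abs_lt] at h hω
    linarith

theorem tendsto_measure_div_le {X S : ∀ n, Ω n → ℝ} {Z : Ω' → ℝ} {r σ : ι → ℝ}
    [NullSingletonClass (μ'.map Z)] (hr : ∀ᶠ n in l, 0 < r n) (hσ : ∀ n, 0 < σ n)
    (hS : ∀ n ω, 0 < S n ω) (hX : TendstoInDistribution (fun n ω => r n * X n ω / σ n) l Z μ μ')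
    (hratio : ∀ ε > 0, Tendsto (fun n => μ n {ω | ε ≤ |r n * S n ω / σ n - 1|}) l (𝓝 0)) (z : ℝ) :
    Tendsto (fun n => μ n {ω | X n ω / S n ω ≤ z}) l (𝓝 (μ'.map Z (Iic z))) := by
  have hthreshold : Tendsto (fun n => μ n {ω | r n * X n ω / σ n ≤ z * (r n * S n ω / σ n)}) l
      (𝓝 (μ'.map Z (Iic z))) := by
    refine tendsto_measure_le_of_tendstoInDistribution hX fun ε hε => ?_
    simpa using tendsto_measure_le_abs_const_mul_sub z hratio hε
  refine hthreshold.congr' ?_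
  filter_upwards [hr] with n hrn
  refine congrArg (μ n) (Set.ext fun ω => ?_)
  rw [mem_ofPred_eq, mem_ofPred_eq, ← mul_div_assoc, div_le_div_iff_of_pos_right (hσ n),
    mul_left_comm, mul_le_mul_iff_right₀ hrn, div_le_iff₀ (hS n ω)]

end ConvergenceInDistribution

section Coordinate

variable {p : Type*} [Fintype p]

lemma map_dotProduct_pi_gaussianReal (u : p → ℝ) :
    (Measure.pi fun _ : p => gaussianReal 0 1).map (fun x => u ⬝ᵥ x) =
      gaussianReal 0 (u ⬝ᵥ u).toNNReal := by
  have hL := IsGaussian.map_eq_gaussianReal (μ := stdGaussian (EuclideanSpace ℝ p))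
    (innerSL ℝ (toLp 2 u))
  rw [integral_strongDual_stdGaussian, variance_dual_stdGaussian, innerSL_apply_norm,
    EuclideanSpace.real_norm_sq_eq, ← map_pi_eq_stdGaussian,
    Measure.map_map (by fun_prop) (by fun_prop)] at hL
  convert! hL using 2
  · ext x
    simp [PiLp.inner_apply, dotProduct, mul_comm]
  · simp [dotProduct, sq]

lemma isCompact_setOf_dotProduct_self_eq_one : IsCompact {u : p → ℝ | u ⬝ᵥ u = 1} := by
  have hsphere : {u : p → ℝ | u ⬝ᵥ u = 1} = ofLp '' Metric.sphere (0 : EuclideanSpace ℝ p) 1 := by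
    have hnorm : ∀ x : EuclideanSpace ℝ p, x ∈ Metric.sphere 0 1 ↔ ofLp x ⬝ᵥ ofLp x = 1 := by
      simp [EuclideanSpace.norm_eq, dotProduct, sq]
    exact Set.ext fun u => ⟨fun hu => ⟨toLp 2 u, (hnorm _).2 hu, rfl⟩,
      fun ⟨x, hx, hxu⟩ => hxu ▸ (hnorm x).1 hx⟩
  rw [hsphere]
  exact (isCompact_sphere _ _).image (PiLp.continuous_ofLp 2 _)

lemma mul_transpose_apply_self_pos [DecidableEq p] {A : Matrix p p ℝ} (hA : IsUnit A.det)
    (i : p) : 0 < (A * Aᵀ) i i := by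
  have hrow : A i ≠ 0 := fun h => hA.ne_zero (det_eq_zero_of_row_eq_zero i (congrFun h))
  exact (dotProduct_self_star_pos_iff (v := A i)).2 hrow

theorem tendstoInDistribution_coordinate_div_sqrt [DecidableEq p] {ι : Type*} {l : Filter ι}
    {Ω : ι → Type*} [∀ n, MeasurableSpace (Ω n)] {P : ∀ n, Measure (Ω n)}
    [∀ n, IsProbabilityMeasure (P n)] {A : ι → Matrix p p ℝ} {Y : ∀ n, Ω n → p → ℝ}
    (hA : ∀ n, IsUnit (A n).det)
    (hY : TendstoInDistribution (fun n ω => (A n)⁻¹ *ᵥ Y n ω) l id P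
      (Measure.pi fun _ : p => gaussianReal 0 1)) (i : p) :
    TendstoInDistribution (fun n ω => Y n ω i / √((A n * (A n)ᵀ) i i)) l id P
      (gaussianReal 0 1) := by
  have hdir : ∀ n, (√((A n * (A n)ᵀ) i i))⁻¹ • A n i ∈ {u : p → ℝ | u ⬝ᵥ u = 1} := fun n => by
    have hpos := mul_transpose_apply_self_pos (hA n) i
    have hrow : A n i ⬝ᵥ A n i = (A n * (A n)ᵀ) i i := rfl
    rw [mem_ofPred_eq, smul_dotProduct, dotProduct_smul, hrow, smul_eq_mul, smul_eq_mul,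
      ← mul_assoc, ← mul_inv, Real.mul_self_sqrt hpos.le, inv_mul_cancel₀ hpos.ne']
  have hproj := tendstoInDistribution_comp_of_mem_isCompact (T := id) (ν := gaussianReal 0 1)
    (g := fun u x : p → ℝ => u ⬝ᵥ x) hY aemeasurable_id isCompact_setOf_dotProduct_self_eq_one hdir
    (by simp only [Function.uncurry_def, dotProduct]; fun_prop)
    fun u (hu : u ⬝ᵥ u = 1) => by simp [map_dotProduct_pi_gaussianReal, hu]
  convert! hproj using 3 with n ω
  have hcancel : A n i ⬝ᵥ (A n)⁻¹ *ᵥ Y n ω = Y n ω i := by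
    change (A n *ᵥ (A n)⁻¹ *ᵥ Y n ω) i = _
    rw [mulVec_mulVec, mul_nonsing_inv _ (hA n), one_mulVec]
  rw [smul_dotProduct, hcancel, smul_eq_mul, div_eq_inv_mul]

end Coordinate

lemma ofReal_stdGaussianCdf (z : ℝ) :
    ENNReal.ofReal (stdGaussianCdf z) = gaussianReal 0 1 (Iic z) :=
  ENNReal.ofReal_toReal (measure_ne_top _ _)

lemma abs_sub_div_sub_sub_div_le {𝕜 : Type*} [Field 𝕜] [LinearOrder 𝕜] [IsStrictOrderedRing 𝕜]
    {x b c d r s : 𝕜} (hs : 0 < s) (h : |b - c| ≤ d / r) :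
    |(x - c) / s - (x - b) / s| ≤ d / (r * s) := by
  rw [← sub_div, sub_sub_sub_cancel_left, abs_div, abs_of_pos hs, ← div_div]
  gcongr

theorem size_distortion_bounds_general {ι p : Type*} [Fintype p] [DecidableEq p]
    {l : Filter ι} [l.NeBot] {Ω : ι → Type*} [∀ n, MeasurableSpace (Ω n)]
    {P : ∀ n, Measure (Ω n)} [∀ n, IsProbabilityMeasure (P n)]
    {θhat : ∀ n, Ω n → p → ℝ} (hθhat : ∀ n, Measurable (θhat n)) {θ : ι → p → ℝ}
    {A Sigm : ι → Matrix p p ℝ} (hA : ∀ n, IsUnit (A n).det) (hSigm : ∀ n, A n * (A n)ᵀ = Sigm n)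
    {r : ι → ℝ} (hr : ∀ᶠ n in l, 0 < r n)
    (hweak : ∀ f : (p → ℝ) → ℝ, Continuous f → (∃ C : ℝ, ∀ x, |f x| ≤ C) →
      Tendsto (fun n => ∫ ω, f ((A n)⁻¹ *ᵥ fun a => r n * (θhat n ω a - θ n a)) ∂P n) l
        (𝓝 (∫ x, f x ∂Measure.pi fun _ : p => gaussianReal 0 1)))
    (i : p) {se : ∀ n, Ω n → ℝ} (hse : ∀ n ω, 0 < se n ω)
    (hratio : ∀ ε > 0,
      Tendsto (fun n => P n {ω | ε ≤ |r n * se n ω / √(Sigm n i i) - 1|}) l (𝓝 0))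
    {v : ℝ} {τ : ι → ℝ} (hτ : ∀ n, |θ n i - τ n| ≤ v / r n) (z : ℝ) :
    ENNReal.ofReal (stdGaussianCdf z) ≤
        liminf (fun n => P n {ω | (θhat n ω i - τ n) / se n ω - v / (r n * se n ω) ≤ z}) l ∧
      limsup (fun n => P n {ω | (θhat n ω i - τ n) / se n ω + v / (r n * se n ω) ≤ z}) l ≤
        ENNReal.ofReal (stdGaussianCdf z) := by
  obtain rfl : (fun n => A n * (A n)ᵀ) = Sigm := funext hSigm
  have hjoint := tendstoInDistribution_of_forall_integral_tendsto (Z := id) (fun n => by fun_prop)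
    aemeasurable_id hweak
  have hcoord := tendstoInDistribution_coordinate_div_sqrt hA hjoint i
  have : NullSingletonClass ((gaussianReal 0 1).map id) := by
    simpa using nullSingletonClass_gaussianReal one_ne_zero
  have hstud : Tendsto (fun n => P n {ω | (θhat n ω i - θ n i) / se n ω ≤ z}) l
      (𝓝 (ENNReal.ofReal (stdGaussianCdf z))) := by
    rw [ofReal_stdGaussianCdf, ← Measure.map_id (μ := gaussianReal 0 1)]
    exact tendsto_measure_div_le hr
      (fun n => Real.sqrt_pos.2 (mul_transpose_apply_self_pos (hA n) i)) hse hcoord hratio z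
  have hbias := fun n ω => abs_le.1 <|
    abs_sub_div_sub_sub_div_le (x := θhat n ω i) (hse n ω) (hτ n)
  constructor
  · rw [← hstud.liminf_eq]
    refine liminf_le_liminf (.of_forall fun n => measure_mono fun ω (hω : _ ≤ z) => ?_)
    rw [mem_ofPred_eq]
    linarith [(hbias n ω).2]
  · rw [← hstud.limsup_eq]
    refine limsup_le_limsup (.of_forall fun n => measure_mono fun ω (hω : _ ≤ z) => ?_)
    rw [mem_ofPred_eq]
    linarith [(hbias n ω).1]

/-- **Size distortion bounds under local misspecification** (Corollary 5): if
`Σ_n^{-1/2} √k_n (θ̂_n − θ_n)` converges in law to `N(0, I_q)`, `σ_n² = (Σ_n)_{2,2}` is bounded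
above and away from zero, `√k_n · se_n / σ_n → 1` in probability, and the null values `τ_n`
satisfy the local bias bound `|β_n − τ_n| ≤ v/√k_n`, then for the t-statistic
`t_n = (β̂_n − τ_n)/se_n` and every `z ∈ ℝ`,
`Φ(z) ≤ liminf P[t_n − v/(√k_n se_n) ≤ z]` and `limsup P[t_n + v/(√k_n se_n) ≤ z] ≤ Φ(z)`. -/
theorem size_distortion_bounds
    (q : ℕ) (k : ℕ → ℕ) (hk : Tendsto k atTop atTop)
    (Om : ℕ → Type*) [∀ n, MeasurableSpace (Om n)]
    (P : ∀ n, Measure (Om n)) (hP : ∀ n, IsProbabilityMeasure (P n))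
    -- estimator, estimand, asymptotic covariance, and its symmetric square root
    (θhat : ∀ n, Om n → Fin q → ℝ) (hθm : ∀ n, Measurable (θhat n))
    (θ : ℕ → Fin q → ℝ)
    (Sigm : ℕ → Matrix (Fin q) (Fin q) ℝ)
    (Sq : ℕ → Matrix (Fin q) (Fin q) ℝ)
    (hSq : ∀ n, (Sq n).IsSymm ∧ (Sq n).PosDef ∧ Sq n * Sq n = Sigm n)
    -- the index of the second coordinate (the coefficient β on D)
    (i1 : Fin q) (hi1 : (i1 : ℕ) = 1)
    -- weak convergence of `Σ_n^{-1/2} √k_n (θ̂_n − θ_n)` to the standard Gaussian on ℝ^q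
    (hweak : ∀ f : (Fin q → ℝ) → ℝ, Continuous f → (∃ C : ℝ, ∀ v, |f v| ≤ C) →
      Tendsto
        (fun n => ∫ ω, f ((Sq n)⁻¹.mulVec fun a =>
          Real.sqrt (k n) * (θhat n ω a - θ n a)) ∂(P n))
        atTop
        (nhds (∫ v, f v ∂(Measure.pi fun _ : Fin q => ProbabilityTheory.gaussianReal 0 1))))
    -- σ_n² = (Σ_n)_{2,2} bounded above and away from zero
    (σlow σhigh : ℝ) (hσlow : 0 < σlow)
    (hσ : ∀ n, σlow ≤ Sigm n i1 i1 ∧ Sigm n i1 i1 ≤ σhigh)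
    -- positive standard errors with `√k_n · se_n / σ_n → 1` in probability
    (se : ∀ n, Om n → ℝ) (hsem : ∀ n, Measurable (se n)) (hsepos : ∀ n ω, 0 < se n ω)
    (hseconv : ∀ ε > (0 : ℝ), Tendsto
      (fun n => P n {ω |
        ε ≤ |Real.sqrt (k n) * se n ω / Real.sqrt (Sigm n i1 i1) - 1|})
      atTop (nhds 0))
    -- local misspecification: `|β_n − τ_n| ≤ v / √k_n`
    (v : ℝ) (hv : 0 < v) (τ : ℕ → ℝ)
    (hτ : ∀ n, |θ n i1 - τ n| ≤ v / Real.sqrt (k n)) :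
    ∀ t : ℝ,
      ENNReal.ofReal (stdGaussianCdf t) ≤
        liminf (fun n => P n {ω |
          (θhat n ω i1 - τ n) / se n ω - v / (Real.sqrt (k n) * se n ω) ≤ t}) atTop ∧
      limsup (fun n => P n {ω |
          (θhat n ω i1 - τ n) / se n ω + v / (Real.sqrt (k n) * se n ω) ≤ t}) atTop ≤
        ENNReal.ofReal (stdGaussianCdf t) := by
  exact size_distortion_bounds_general hθm (fun n => (hSq n).2.1.det_pos.ne'.isUnit)
    (fun n => by rw [(hSq n).1.eq, (hSq n).2.2])
    ((hk.eventually_gt_atTop 0).mono fun n hn => by positivity) hweak i1 hsepos hseconv hτ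
end

section
/- (Bias representation with interaction terms) Let (Ω, 𝒜, P) carry Y : Ω → ℝ, D : Ω → {0,1}, X : Ω → ℝ^p. Assume Y = l(X, D) + ε where l : ℝ^p × {0,1} → ℝ is measurable, l(X,D) and ε are integrable, E[ε] = 0, E[D·ε] = 0, and 0 < P[D=1] < 1. Assume further that l(·,0) and l(·,1) are integrable with respect to both G¹ and G⁰, and let f₀ be a version of E[Y | X=·, D=0] integrable with respect to G⁰ and G¹, with τ := E[Y | D=1] − ∫ f₀ dG¹. Then E[l(X,1) − l(X,0) | D=1] − τ = ∫ (f₀(x) − l(x,0)) d(G¹ − G⁰)(x). -/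
/-!
Orthogonality of the residual to `1` and to the binary variable `D` says that it has mean zero on
each of the events `{D = 0}` and `{D = 1}`. Hence `E[Y | D = d] = ∫ l(·, d) dGᵈ` for both `d`. In
`E[l(X, 1) - l(X, 0) | D = 1] - τ` the case `d = 1` cancels `∫ l(·, 1) dG¹` and leaves
`∫ (f₀ - l(·, 0)) dG¹`. The case `d = 0` says that `∫ (f₀ - l(·, 0)) dG⁰` vanishes, because `f₀` has
`G⁰`-mean `E[Y | D = 0]`.
-/

open MeasureTheory

section

open ProbabilityTheory

variable {Ω 𝓧 F : Type*} [MeasurableSpace Ω] [MeasurableSpace 𝓧] [NormedAddCommGroup F]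
  [NormedSpace ℝ F] {P : Measure Ω}

theorem hasLaw_cond_of_forall_apply_eq_div {X : Ω → 𝓧} {A : Set Ω} {G : Measure 𝓧}
    (hX : Measurable X) (hG : ∀ B, MeasurableSet B → G B = P (X ⁻¹' B ∩ A) / P A) :
    HasLaw X G P[|A] where
  aemeasurable := hX.aemeasurable
  map_eq := by
    ext B hB
    rw [Measure.map_apply hX hB, cond_apply' (hX hB), hG B hB, ENNReal.div_eq_inv_mul,
      Set.inter_comm]

theorem integral_cond (f : Ω → F) (A : Set Ω) :
    ∫ ω, f ω ∂P[|A] = (P.real A)⁻¹ • ∫ ω in A, f ω ∂P := by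
  rw [ProbabilityTheory.cond, ← setAverage_eq', setAverage_eq]

theorem setOf_eq_zero_eq_compl_setOf_eq_one {α M : Type*} [Zero M] [One M] [NeZero (1 : M)]
    {D : α → M} (hD01 : ∀ a, D a = 0 ∨ D a = 1) : {a | D a = 0} = {a | D a = 1}ᶜ := by
  ext a
  rcases hD01 a with h | h <;> simp [h]

theorem integral_smul_eq_setIntegral_of_eq_zero_or_one {D : Ω → ℝ} (hD : Measurable D)
    (hD01 : ∀ ω, D ω = 0 ∨ D ω = 1) (f : Ω → F) :
    ∫ ω, D ω • f ω ∂P = ∫ ω in {ω | D ω = 1}, f ω ∂P := by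
  rw [← integral_indicator (measurableSet_eq_fun hD measurable_const)]
  congr 1 with ω
  rcases hD01 ω with h | h <;> simp [h]

theorem setIntegral_eq_zero_of_integral_smul_eq_zero {D : Ω → ℝ} (hD : Measurable D)
    (hD01 : ∀ ω, D ω = 0 ∨ D ω = 1) {ε : Ω → F} (hε : Integrable ε P)
    (hmean : ∫ ω, ε ω ∂P = 0) (horth : ∫ ω, D ω • ε ω ∂P = 0) :
    ∫ ω in {ω | D ω = 0}, ε ω ∂P = 0 ∧ ∫ ω in {ω | D ω = 1}, ε ω ∂P = 0 := by
  rw [integral_smul_eq_setIntegral_of_eq_zero_or_one hD hD01] at horth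
  refine ⟨?_, horth⟩
  rw [setOf_eq_zero_eq_compl_setOf_eq_one hD01,
    setIntegral_compl (measurableSet_eq_fun hD measurable_const) hε, hmean, horth, sub_zero]

theorem integral_cond_eq_integral_of_setIntegral_eq_zero {T : Type*} {D : Ω → T} {d : T}
    {X : Ω → 𝓧} {G : Measure 𝓧} {l : 𝓧 → T → F} {Y ε : Ω → F}
    (hd : MeasurableSet {ω | D ω = d}) (hPd : P {ω | D ω = d} ≠ 0)
    (hX : HasLaw X G P[|{ω | D ω = d}]) (hY : ∀ ω, Y ω = l (X ω) (D ω) + ε ω)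
    (hl : Integrable (fun x => l x d) G) (hε : Integrable ε P)
    (hmean : ∫ ω in {ω | D ω = d}, ε ω ∂P = 0) :
    ∫ ω, Y ω ∂P[|{ω | D ω = d}] = ∫ x, l x d ∂G := by
  have hlX : Integrable (fun ω => l (X ω) d) P[|{ω | D ω = d}] :=
    (hX.map_eq.symm ▸ hl).comp_aemeasurable hX.aemeasurable
  have hεd : Integrable ε P[|{ω | D ω = d}] :=
    hε.restrict.smul_measure (ENNReal.inv_ne_top.2 hPd)
  calc ∫ ω, Y ω ∂P[|{ω | D ω = d}]
      = ∫ ω, (l (X ω) d + ε ω) ∂P[|{ω | D ω = d}] :=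
        integral_congr_ae <| ae_cond_of_forall_mem hd fun ω (hω : D ω = d) => hω ▸ hY ω
    _ = ∫ ω, l (X ω) d ∂P[|{ω | D ω = d}] := by
        rw [integral_add hlX hεd, integral_cond ε, hmean, smul_zero, add_zero]
    _ = ∫ x, l x d ∂G := hX.integral_comp hl.aestronglyMeasurable

theorem bias_representation_interactions_general [IsProbabilityMeasure P] {D : Ω → ℝ} {X : Ω → 𝓧}
    {l : 𝓧 → ℝ → F} {Y ε : Ω → F} {G0 G1 : Measure 𝓧} {f0 : 𝓧 → F}
    (hD : Measurable D) (hD01 : ∀ ω, D ω = 0 ∨ D ω = 1)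
    (hY : ∀ ω, Y ω = l (X ω) (D ω) + ε ω)
    (hε : Integrable ε P) (hmean : ∫ ω, ε ω ∂P = 0) (horth : ∫ ω, D ω • ε ω ∂P = 0)
    (hP_pos : 0 < P {ω | D ω = 1}) (hP_lt : P {ω | D ω = 1} < 1)
    (hG0 : HasLaw X G0 P[|{ω | D ω = 0}]) (hG1 : HasLaw X G1 P[|{ω | D ω = 1}])
    (hl00 : Integrable (fun x => l x 0) G0) (hl01 : Integrable (fun x => l x 0) G1)
    (hl11 : Integrable (fun x => l x 1) G1)
    (hf00 : Integrable f0 G0) (hf01 : Integrable f0 G1)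
    (hf0 : ∫ x, f0 x ∂G0 = ∫ ω, Y ω ∂P[|{ω | D ω = 0}]) :
    ∫ ω, (l (X ω) 1 - l (X ω) 0) ∂P[|{ω | D ω = 1}]
        - (∫ ω, Y ω ∂P[|{ω | D ω = 1}] - ∫ x, f0 x ∂G1)
      = ∫ x, (f0 x - l x 0) ∂G1 - ∫ x, (f0 x - l x 0) ∂G0 := by
  have hmeas (d : ℝ) : MeasurableSet {ω | D ω = d} := measurableSet_eq_fun hD measurable_const
  have hP0 : P {ω | D ω = 0} ≠ 0 := by
    rw [setOf_eq_zero_eq_compl_setOf_eq_one hD01, Ne, prob_compl_eq_zero_iff (hmeas 1)]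
    exact hP_lt.ne
  obtain ⟨hε0, hε1⟩ := setIntegral_eq_zero_of_integral_smul_eq_zero hD hD01 hε hmean horth
  have hY0 := integral_cond_eq_integral_of_setIntegral_eq_zero (hmeas 0) hP0 hG0 hY hl00 hε hε0
  have hY1 := integral_cond_eq_integral_of_setIntegral_eq_zero (hmeas 1) hP_pos.ne' hG1 hY hl11 hε
    hε1
  have heffect : ∫ ω, (l (X ω) 1 - l (X ω) 0) ∂P[|{ω | D ω = 1}] = ∫ x, (l x 1 - l x 0) ∂G1 :=
    hG1.integral_comp (hl11.sub hl01).aestronglyMeasurable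
  rw [heffect, hY1, integral_sub hl11 hl01, integral_sub hf01 hl01, integral_sub hf00 hl00, hf0,
    hY0]
  abel

end

/-- **Bias representation with interaction terms** (Proposition 5): if `Y = l(X,D) + ε` with
`E[ε] = 0`, `E[D ε] = 0` and `0 < P[D=1] < 1`, then
`E[l(X,1) − l(X,0) | D=1] − τ = ∫ (f₀(x) − l(x,0)) d(G¹ − G⁰)(x)`. -/
theorem bias_representation_interactions
    {Ω : Type*} [MeasurableSpace Ω] (P : Measure Ω) [IsProbabilityMeasure P]
    {p : ℕ}
    (Y : Ω → ℝ) (D : Ω → ℝ) (X : Ω → EuclideanSpace ℝ (Fin p))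
    (hYm : Measurable Y) (hDm : Measurable D) (hXm : Measurable X)
    (hD01 : ∀ ω, D ω = 0 ∨ D ω = 1)
    -- the (possibly interacted) regression function l : ℝ^p × {0,1} → ℝ, measurable
    (l : EuclideanSpace ℝ (Fin p) → ℝ → ℝ)
    (hl0m : Measurable (fun x => l x 0)) (hl1m : Measurable (fun x => l x 1))
    -- Y = l(X,D) + ε with l(X,D), ε integrable, E[ε] = 0 and E[Dε] = 0
    (eps : Ω → ℝ) (heps : ∀ ω, eps ω = Y ω - l (X ω) (D ω))
    (hlint : Integrable (fun ω => l (X ω) (D ω)) P)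
    (hepsint : Integrable eps P)
    (hepsmean : ∫ ω, eps ω ∂P = 0)
    (hepsorth : ∫ ω, D ω * eps ω ∂P = 0)
    -- 0 < P[D = 1] < 1
    (hD1pos : 0 < P {ω | D ω = 1}) (hD1lt : P {ω | D ω = 1} < 1)
    -- conditional laws of X given D = d
    (G0 G1 : Measure (EuclideanSpace ℝ (Fin p)))
    (hG0 : ∀ B : Set (EuclideanSpace ℝ (Fin p)), MeasurableSet B →
      G0 B = P ({ω | X ω ∈ B} ∩ {ω | D ω = 0}) / P {ω | D ω = 0})
    (hG1 : ∀ B : Set (EuclideanSpace ℝ (Fin p)), MeasurableSet B →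
      G1 B = P ({ω | X ω ∈ B} ∩ {ω | D ω = 1}) / P {ω | D ω = 1})
    -- l(·,0), l(·,1) are integrable with respect to both G¹ and G⁰
    (hl00 : Integrable (fun x => l x 0) G0) (hl01 : Integrable (fun x => l x 0) G1)
    (hl10 : Integrable (fun x => l x 1) G0) (hl11 : Integrable (fun x => l x 1) G1)
    -- f₀ is a version of E[Y | X = ·, D = 0]
    (f0 : EuclideanSpace ℝ (Fin p) → ℝ) (hf0m : Measurable f0)
    (hf0i0 : Integrable f0 G0) (hf0i1 : Integrable f0 G1)
    (hf0 : ∀ B : Set (EuclideanSpace ℝ (Fin p)), MeasurableSet B →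
      ∫ x in B, f0 x ∂G0 =
        (∫ ω in {ω | X ω ∈ B} ∩ {ω | D ω = 0}, Y ω ∂P) / (P {ω | D ω = 0}).toReal)
    -- τ := E[Y | D = 1] − ∫ f₀ dG¹
    (τ : ℝ)
    (hτ : τ = (∫ ω in {ω | D ω = 1}, Y ω ∂P) / (P {ω | D ω = 1}).toReal - ∫ x, f0 x ∂G1) :
    (∫ ω in {ω | D ω = 1}, (l (X ω) 1 - l (X ω) 0) ∂P) / (P {ω | D ω = 1}).toReal - τ
      = (∫ x, (f0 x - l x 0) ∂G1) - ∫ x, (f0 x - l x 0) ∂G0 := by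
  simpa only [hτ, integral_cond, smul_eq_mul, Measure.real, inv_mul_eq_div] using
    bias_representation_interactions_general hDm hD01 (fun ω => eq_add_of_sub_eq' (heps ω).symm)
      hepsint hepsmean hepsorth hD1pos hD1lt (hasLaw_cond_of_forall_apply_eq_div hXm hG0)
      (hasLaw_cond_of_forall_apply_eq_div hXm hG1) hl00 hl01 hl11 hf0i0 hf0i1
      (by simpa [integral_cond, Measure.real, inv_mul_eq_div] using hf0 Set.univ .univ)
end

section
/- (Average nearest-neighbor distance vanishes for bounded configurations) Fix q ∈ ℕ, constants K > 0 and Dm > 0, and a metric ν on ℝ^q satisfying ν(w, w') ≤ K·‖w − w'‖ for all w, w' (Euclidean domination). Then for every ε > 0 there exists N ∈ ℕ such that: for every finite index set S with |S| ≥ N and every family (w_i)_{i ∈ S} of points of ℝ^q with ‖w_i − w_j‖ ≤ Dm for all i, j ∈ S, if l(i) is any minimizer over j ∈ S \ {i} of ν(w_i, w_j), then |S|^{-1} Σ_{i ∈ S} ν(w_i, w_{l(i)}) ≤ ε. In other words, the average ν-distance to the nearest neighbor tends to zero, uniformly over configurations of uniformly bounded diameter, as the number of points tends to infinity. -/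
/-!
If `ν ≤ K‖·‖`, points whose nearest neighbor is at `ν`-distance more than `K * δ` are
`δ`-separated, so a totally bounded set holds at most a fixed number of them. In the average over
`n` points they contribute `O(1 / n)`, while each of the others adds at most `K * δ / n`.
Translating one of the points to the origin puts every configuration of diameter at most `Dm` into
the same ball, which makes the bound uniform.
-/

section

open Filter Metric Set
open scoped Finset NNReal

variable {X ι : Type*} {A : Set X} {S : Finset ι} {x : ι → X} {f : ι → ℝ}

lemma packingNumber_ne_top_of_totallyBounded [PseudoEMetricSpace X] {δ : ℝ≥0} (hδ : δ ≠ 0)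
    (hA : TotallyBounded A) : packingNumber δ A ≠ ⊤ := by
  obtain ⟨C, -, hC, hcover⟩ :=
    exists_finite_isCover_of_totallyBounded (div_ne_zero hδ two_ne_zero) hA
  refine ne_top_of_le_ne_top hC.encard_lt_top.ne ?_
  calc packingNumber δ A
    _ = packingNumber (2 * (δ / 2)) A := by rw [mul_div_cancel₀ δ two_ne_zero]
    _ ≤ externalCoveringNumber (δ / 2) A := packingNumber_two_mul_le_externalCoveringNumber _ A
    _ ≤ C.encard := hcover.externalCoveringNumber_le_encard

lemma encard_le_packingNumber_of_pairwise_lt_edist [PseudoEMetricSpace X] {δ : ℝ≥0} {s : Set ι}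
    (hx : MapsTo x s A) (hsep : s.Pairwise fun i j ↦ δ < edist (x i) (x j)) :
    s.encard ≤ packingNumber δ A := by
  have hinj : InjOn x s := by
    intro i hi j hj hij
    by_contra hne
    have hlt : δ < edist (x i) (x j) := hsep hi hj hne
    rw [hij, edist_self] at hlt
    exact not_lt_zero hlt
  have himage : IsSeparated δ (x '' s) := Set.Pairwise.image hsep
  rw [← hinj.encard_image]
  exact himage.encard_le_packingNumber hx.image_subset

lemma card_filter_lt_le_packingNumber [PseudoMetricSpace X] (δ : ℝ≥0) (hx : MapsTo x S A)
    (hf : (S : Set ι).Pairwise fun i j ↦ f i ≤ dist (x i) (x j)) :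
    (#{i ∈ S | δ < f i} : ℕ∞) ≤ packingNumber δ A := by
  have hsub : (({i ∈ S | δ < f i} : Finset ι) : Set ι) ⊆ S :=
    Finset.coe_subset.2 (Finset.filter_subset _ S)
  rw [← encard_coe_eq_coe_finsetCard]
  refine encard_le_packingNumber_of_pairwise_lt_edist (hx.mono_left hsub) fun i hi j hj hne ↦ ?_
  have hlt : δ < dist (x i) (x j) :=
    (Finset.mem_filter.1 hi).2.trans_le (hf (hsub hi) (hsub hj) hne)
  simpa only [edist_nndist, ENNReal.coe_lt_coe, ← NNReal.coe_lt_coe, coe_nndist] using hlt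

lemma average_le_add_card_filter_lt_mul_div {δ M : ℝ} (hδ : 0 ≤ δ) (hM : ∀ i ∈ S, f i ≤ M) :
    (#S : ℝ)⁻¹ * ∑ i ∈ S, f i ≤ δ + #{i ∈ S | δ < f i} * M / #S := by
  rcases S.eq_empty_or_nonempty with rfl | hS
  · simpa using hδ
  have hcard : (0 : ℝ) < #S := by exact_mod_cast hS.card_pos
  have hterm : ∀ i ∈ S, f i ≤ δ + if δ < f i then M else 0 := by
    intro i hi
    split_ifs with h
    · linarith [hM i hi]
    · linarith
  rw [inv_mul_le_iff₀ hcard, mul_add, mul_div_cancel₀ _ hcard.ne']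
  calc ∑ i ∈ S, f i
    _ ≤ ∑ i ∈ S, (δ + if δ < f i then M else 0) := Finset.sum_le_sum hterm
    _ = #S * δ + #{i ∈ S | δ < f i} * M := by
      simp only [Finset.sum_add_distrib, ← Finset.sum_filter, Finset.sum_const, nsmul_eq_mul]

lemma le_diam_of_pairwise_le_dist [PseudoMetricSpace X] (hA : Bornology.IsBounded A)
    (hS : 1 < #S) (hx : MapsTo x S A) (hf : (S : Set ι).Pairwise fun i j ↦ f i ≤ dist (x i) (x j))
    {i : ι} (hi : i ∈ S) : f i ≤ diam A := by
  obtain ⟨j, hj, hne⟩ := Finset.exists_mem_ne hS i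
  exact (hf hi hj hne.symm).trans (dist_le_diam_of_mem hA (hx hi) (hx hj))

theorem exists_average_le_of_totallyBounded.{u} [PseudoMetricSpace X] (hA : TotallyBounded A)
    {ε : ℝ} (hε : 0 < ε) :
    ∃ N : ℕ, ∀ (ι : Type u) (S : Finset ι), N ≤ #S → ∀ x : ι → X, MapsTo x S A →
      ∀ f : ι → ℝ, ((S : Set ι).Pairwise fun i j ↦ f i ≤ dist (x i) (x j)) →
        (#S : ℝ)⁻¹ * ∑ i ∈ S, f i ≤ ε := by
  obtain ⟨δ, hδε⟩ : ∃ δ : ℝ≥0, (δ : ℝ) = ε / 2 := ⟨⟨ε / 2, (half_pos hε).le⟩, rfl⟩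
  have hδ : 0 < (δ : ℝ) := hδε ▸ half_pos hε
  obtain ⟨P, hP⟩ := ENat.ne_top_iff_exists.1
    (packingNumber_ne_top_of_totallyBounded (NNReal.coe_pos.1 hδ).ne' hA)
  obtain ⟨N, hN⟩ := eventually_atTop.1
    ((tendsto_const_div_atTop_nhds_zero_nat (P * diam A)).eventually_le_const hδ)
  refine ⟨max N 2, fun ι S hS x hx f hf ↦ ?_⟩
  obtain ⟨hNS, htwo⟩ := max_le_iff.1 hS
  have hfar : #{i ∈ S | δ < f i} ≤ P := by
    exact_mod_cast hP ▸ card_filter_lt_le_packingNumber δ hx hf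
  calc (#S : ℝ)⁻¹ * ∑ i ∈ S, f i
    _ ≤ δ + #{i ∈ S | δ < f i} * diam A / #S :=
      average_le_add_card_filter_lt_mul_div hδ.le
        fun i hi ↦ le_diam_of_pairwise_le_dist hA.isBounded htwo hx hf hi
    _ ≤ δ + P * diam A / #S := by gcongr
    _ ≤ δ + δ := by linarith [hN _ hNS]
    _ = ε := by rw [hδε, add_halves]

theorem average_nearest_neighbor_distance_vanishes_general.{u} {E : Type*}
    [SeminormedAddCommGroup E] [ProperSpace E] {K : ℝ} (Dm : ℝ) (hK : 0 < K) {ν : E → E → ℝ}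
    (hdom : ∀ w w', ν w w' ≤ K * ‖w - w'‖) :
    ∀ ε > (0 : ℝ), ∃ N : ℕ, ∀ (ι : Type u) (S : Finset ι), N ≤ #S → ∀ w : ι → E,
      (∀ i ∈ S, ∀ j ∈ S, ‖w i - w j‖ ≤ Dm) →
      ∀ l : ι → ι,
        (∀ i ∈ S, l i ∈ S ∧ l i ≠ i ∧ ∀ j ∈ S, j ≠ i → ν (w i) (w (l i)) ≤ ν (w i) (w j)) →
        (#S : ℝ)⁻¹ * ∑ i ∈ S, ν (w i) (w (l i)) ≤ ε := by
  intro ε hε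
  obtain ⟨N, hN⟩ := exists_average_le_of_totallyBounded
    (isCompact_closedBall (0 : E) Dm).totallyBounded (div_pos hε hK)
  refine ⟨N, fun ι S hS w hw l hl ↦ ?_⟩
  rcases S.eq_empty_or_nonempty with rfl | ⟨i₀, hi₀⟩
  · simpa using hε.le
  have hball : MapsTo (fun i ↦ w i - w i₀) S (closedBall 0 Dm) := fun i hi ↦ by
    simpa only [mem_closedBall_zero_iff] using hw i hi i₀ hi₀
  have hnear : (S : Set ι).Pairwise fun i j ↦
      ν (w i) (w (l i)) / K ≤ dist (w i - w i₀) (w j - w i₀) := by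
    intro i hi j hj hne
    rw [dist_sub_right, dist_eq_norm, div_le_iff₀' hK]
    exact ((hl i hi).2.2 j hj hne.symm).trans (hdom (w i) (w j))
  have havg := hN ι S hS _ hball _ hnear
  rwa [← Finset.sum_div, ← mul_div_assoc, div_le_div_iff_of_pos_right hK] at havg

end

/-- **Average nearest-neighbor distance vanishes for bounded configurations** (Lemma 3):
for a metric `ν` on `ℝ^q` dominated by the Euclidean norm (`ν ≤ K‖·‖`), and for every `ε > 0`,
there is `N` such that for any finite family of at least `N` points of Euclidean diameter at
most `Dm`, the average `ν`-distance of each point to its nearest neighbor is at most `ε`. -/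
theorem average_nearest_neighbor_distance_vanishes
    (q : ℕ) (K Dm : ℝ) (hK : 0 < K) (hDm : 0 < Dm)
    (ν : EuclideanSpace ℝ (Fin q) → EuclideanSpace ℝ (Fin q) → ℝ)
    (hν0 : ∀ w, ν w w = 0) (hνnn : ∀ w w', 0 ≤ ν w w')
    (hνsymm : ∀ w w', ν w w' = ν w' w)
    (hνtri : ∀ w u w', ν w w' ≤ ν w u + ν u w')
    (hdom : ∀ w w', ν w w' ≤ K * ‖w - w'‖) :
    ∀ ε > (0 : ℝ), ∃ N : ℕ, ∀ (ι : Type) (S : Finset ι), N ≤ S.card →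
      ∀ w : ι → EuclideanSpace ℝ (Fin q),
        (∀ i ∈ S, ∀ j ∈ S, ‖w i - w j‖ ≤ Dm) →
        ∀ l : ι → ι,
          (∀ i ∈ S, l i ∈ S ∧ l i ≠ i ∧
            ∀ j ∈ S, j ≠ i → ν (w i) (w (l i)) ≤ ν (w i) (w j)) →
          (S.card : ℝ)⁻¹ * ∑ i ∈ S, ν (w i) (w (l i)) ≤ ε := by
  exact average_nearest_neighbor_distance_vanishes_general Dm hK hdom
end
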